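/- Assume the p-modular Hadamard conjecture: for every odd prime p, for all but finitely many positive integers d, if d is even or d is a nonzero quadratic residue modulo p then there exists a p-modular Hadamard matrix of order d (a d×d matrix over F_p with all entries squaring to 1 and HᵀH = d·I over F_p). Then the set of positive integers d for which there exist a prime p ≡ 3 mod 4 and a (12,16,96)-SIC of d² vectors in F_{p²}^d contains almost every positive integer; that is, its complement S ⊆ ℕ satisfies limsup_{n→∞} |S ∩ {1,…,n}|/n = 0. -/

import Mathlib

open scoped BigOperators

noncomputable section

/-- A `(12,16,96)`-SIC of `d²` vectors in `F_{p²}^d = (GaloisField p 2)^d`, where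
conjugation is the Frobenius `x ↦ x ^ p`: the vectors have norm `12`, pairwise
products of cross inner products equal `16`, they resolve `96` times the identity,
and they span the space. -/
def IsSIC (p : ℕ) [Fact p.Prime] (d : ℕ)
    (x : Fin (d ^ 2) → Fin d → GaloisField p 2) : Prop :=
  (∀ m, (∑ k, x m k ^ p * x m k) = 12) ∧
  (∀ m n, m ≠ n →
    (∑ k, x m k ^ p * x n k) * (∑ k, x n k ^ p * x m k) = 16) ∧
  (∀ k l, (∑ m, x m k * x m l ^ p) = if k = l then 96 else 0) ∧
  Submodule.span (GaloisField p 2) (Set.range x) = ⊤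

/-!
Let `H` be a Hadamard matrix with entries `±1` and let `z = -1 + 2i`. Multiplying the `j`-th entry
of the `a`-th column of `H` by `z`, for all pairs `(a, j)`, gives `d²` vectors of norm `d + 4`
whose cross products are `16` when `a ≠ b` and `(d - 4)²` when `a = b`. So they form a
`(12, 16, 96)`-SIC as soon as `d = 8` in the field.

If `p ≡ 7 [MOD 8]`, then `2`, hence also `8`, is a nonzero square modulo `p`, and the conjecture
supplies a `p`-modular Hadamard matrix in every large dimension `d ≡ 8 [MOD p]`. The exceptional
dimensions thus eventually avoid one residue class modulo each prime `p ≡ 7 [MOD 8]`. The sum of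
the reciprocals of these primes diverges by Dirichlet, so `∏ (1 - 1 / p) = 0` and the exceptional
set has density zero.
-/

open Filter Matrix Topology

section Sieve

lemma exists_finset_subset_prod_one_sub_lt {ι : Type*} {A : Set ι} {f : ι → ℝ}
    (hf₀ : ∀ i ∈ A, 0 ≤ f i) (hf₁ : ∀ i ∈ A, f i ≤ 1) (hf : ¬ Summable (A.indicator f))
    {ε : ℝ} (hε : 0 < ε) :
    ∃ s : Finset ι, ↑s ⊆ A ∧ ∏ i ∈ s, (1 - f i) < ε := by
  classical
  obtain ⟨t, ht⟩ : ∃ t : Finset ι, -Real.log ε < ∑ i ∈ t, A.indicator f i := by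
    by_contra! hbounded
    exact hf (summable_of_sum_le (Set.indicator_nonneg hf₀) hbounded)
  have hsub : ∀ i ∈ t.filter (· ∈ A), i ∈ A := fun i hi => (Finset.mem_filter.1 hi).2
  refine ⟨t.filter (· ∈ A), hsub, ?_⟩
  calc ∏ i ∈ t with i ∈ A, (1 - f i)
      ≤ ∏ i ∈ t with i ∈ A, Real.exp (-f i) :=
        Finset.prod_le_prod (fun i hi => sub_nonneg.2 (hf₁ i (hsub i hi)))
          fun i _ => Real.one_sub_le_exp_neg _
    _ = Real.exp (-∑ i ∈ t, A.indicator f i) := by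
        rw [← Real.exp_sum, Finset.sum_neg_distrib, Finset.sum_filter]
        simp only [Set.indicator_apply]
    _ < Real.exp (Real.log ε) := Real.exp_lt_exp.2 (neg_lt.1 ht)
    _ = ε := Real.exp_log hε

lemma totient_prod_primes_div (P : Finset ℕ) (hP : ∀ p ∈ P, p.Prime) :
    ((∏ p ∈ P, p).totient : ℝ) / (∏ p ∈ P, p : ℕ) = ∏ p ∈ P, (1 - (p : ℝ)⁻¹) := by
  have hprod : ((∏ p ∈ P, p : ℕ) : ℝ) ≠ 0 :=
    Nat.cast_ne_zero.2 (Finset.prod_ne_zero_iff.2 fun p hp => (hP p hp).ne_zero)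
  have htotient := congrArg (Rat.cast : ℚ → ℝ) (Nat.totient_eq_mul_prod_factors (∏ p ∈ P, p))
  rw [Nat.primeFactors_prod hP] at htotient
  rw [div_eq_iff hprod, mul_comm]
  simpa using htotient

lemma exists_ncard_inter_Icc_le_of_eventually_coprime {S : Set ℕ} {M : ℕ} (hM : M ≠ 0) (r : ℕ)
    (hS : ∀ᶠ d in atTop, d + r ∈ S → M.Coprime d) :
    ∃ C : ℝ, ∀ n : ℕ, ((S ∩ Set.Icc 1 n).ncard : ℝ) ≤ C + M.totient / M * n := by
  obtain ⟨L, hL⟩ := eventually_atTop.1 hS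
  refine ⟨L + r + 1 + M.totient, fun n => ?_⟩
  have hcover : S ∩ Set.Icc 1 n ⊆ ↑(Finset.range (L + r + 1) ∪
      ({x ∈ Finset.Ico 1 (1 + n) | M.Coprime x}).image (· + r)) := by
    rintro d ⟨hdS, -, hdn⟩
    simp only [Finset.coe_union, Set.mem_union, Finset.mem_coe, Finset.mem_range, Finset.mem_image,
      Finset.mem_filter, Finset.mem_Ico]
    refine (lt_or_ge d (L + r + 1)).imp_right fun hd => ?_
    obtain ⟨x, rfl⟩ := Nat.exists_eq_add_of_le' (show r ≤ d by omega)
    exact ⟨x, ⟨by omega, hL x (by omega) hdS⟩, rfl⟩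
  have hcard : (S ∩ Set.Icc 1 n).ncard ≤ L + r + 1 + M.totient * (n / M + 1) :=
    calc (S ∩ Set.Icc 1 n).ncard
        ≤ _ := Set.ncard_le_ncard hcover (Finset.finite_toSet _)
      _ ≤ (Finset.range (L + r + 1)).card + {x ∈ Finset.Ico 1 (1 + n) | M.Coprime x}.card := by
        rw [Set.ncard_coe_finset]
        exact (Finset.card_union_le _ _).trans (Nat.add_le_add_left Finset.card_image_le _)
      _ ≤ L + r + 1 + M.totient * (n / M + 1) := by
        rw [Finset.card_range]
        exact Nat.add_le_add_left (Nat.Ico_filter_coprime_le 1 n hM) _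
  calc ((S ∩ Set.Icc 1 n).ncard : ℝ)
      ≤ L + r + 1 + M.totient * ((n / M : ℕ) + 1) := by exact_mod_cast hcard
    _ ≤ L + r + 1 + M.totient * (n / M + 1) := by gcongr; exact Nat.cast_div_le
    _ = L + r + 1 + M.totient + M.totient / M * n := by ring

/-- `S` has natural density zero: `|S ∩ {1, …, n}| / n → 0`. -/
def HasDensityZero (S : Set ℕ) : Prop :=
  Tendsto (fun n : ℕ => ((S ∩ Set.Icc 1 n).ncard : ℝ) / n) atTop (𝓝 0)

lemma hasDensityZero_of_forall_exists_ncard_le {S : Set ℕ}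
    (hS : ∀ ε : ℝ, 0 < ε → ∃ C : ℝ, ∀ n : ℕ, ((S ∩ Set.Icc 1 n).ncard : ℝ) ≤ C + ε * n) :
    HasDensityZero S := by
  refine tendsto_order.2 ⟨fun b hb => .of_forall fun n => hb.trans_le (by positivity),
    fun ε hε => ?_⟩
  obtain ⟨C, hC⟩ := hS (ε / 2) (half_pos hε)
  have hC_div : ∀ᶠ n : ℕ in atTop, C / n < ε / 2 :=
    (tendsto_const_div_atTop_nhds_zero_nat C).eventually_lt_const (half_pos hε)
  filter_upwards [hC_div, eventually_gt_atTop 0] with n hn hn₀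
  have hn₀' : (0 : ℝ) < n := Nat.cast_pos.2 hn₀
  rw [div_lt_iff₀ hn₀'] at hn ⊢
  linarith [hC n]

theorem hasDensityZero_of_eventually_notMem_residue {A S : Set ℕ} (hA : ∀ p ∈ A, p.Prime)
    (hA_div : ¬ Summable (A.indicator fun p : ℕ => (p : ℝ)⁻¹)) (r : ℕ → ℕ)
    (hS : ∀ p ∈ A, ∀ᶠ d in atTop, d ≡ r p [MOD p] → d ∉ S) : HasDensityZero S := by
  refine hasDensityZero_of_forall_exists_ncard_le fun ε hε => ?_
  obtain ⟨P, hPA, hPε⟩ := exists_finset_subset_prod_one_sub_lt (fun p _ => by positivity)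
    (fun p _ => Nat.cast_inv_le_one p) hA_div hε
  have hP : ∀ p ∈ P, p.Prime := fun p hp => hA p (hPA hp)
  obtain ⟨r₀, hr₀⟩ := Nat.chineseRemainderOfFinset r id P (fun p hp => (hP p hp).ne_zero)
    fun p hp q hq hpq => (Nat.coprime_primes (hP p hp) (hP q hq)).2 hpq
  have hcoprime : ∀ᶠ d in atTop, d + r₀ ∈ S → (∏ p ∈ P, p).Coprime d := by
    have havoid : ∀ᶠ d in atTop, ∀ p ∈ P, d ≡ r p [MOD p] → d ∉ S :=
      (eventually_all_finset P).2 fun p hp => hS p (hPA hp)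
    filter_upwards [(tendsto_add_atTop_nat r₀).eventually havoid] with d hd hdS
    refine Nat.Coprime.prod_left fun p hp => (hP p hp).coprime_iff_not_dvd.2 fun hpd => ?_
    have hmod : d + r₀ ≡ r p [MOD p] := by
      simpa using (Nat.modEq_zero_iff_dvd.2 hpd).add (hr₀ p hp)
    exact hd p hp hmod hdS
  have hprod : ∏ p ∈ P, p ≠ 0 := Finset.prod_ne_zero_iff.2 fun p hp => (hP p hp).ne_zero
  obtain ⟨C, hC⟩ := exists_ncard_inter_Icc_le_of_eventually_coprime hprod r₀ hcoprime
  rw [totient_prod_primes_div P hP] at hC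
  exact ⟨C, fun n => (hC n).trans (by gcongr)⟩

end Sieve

section PrimesInResidueClass

open ArithmeticFunction.vonMangoldt

variable {q : ℕ}

lemma mul_residueClass_div_rpow_le (a : ZMod q) (n : ℕ) {t : ℝ} (ht : 0 < t) (ht₁ : t ≤ 1) :
    t * (residueClass a n / (n : ℝ) ^ (1 + t)) ≤
      {p : ℕ | p.Prime ∧ (p : ZMod q) = a}.indicator (fun p => (p : ℝ)⁻¹) n +
        (if n.Prime then 0 else residueClass a n) / n := by
  rcases n.eq_zero_or_pos with rfl | hn
  · simp [Set.indicator_apply]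
  have hn₀ : (0 : ℝ) < n := Nat.cast_pos.2 hn
  rw [Real.rpow_add hn₀, Real.rpow_one]
  by_cases hprime : n.Prime
  · by_cases hna : (n : ZMod q) = a
    · have hlog : t * Real.log n ≤ (n : ℝ) ^ t :=
        (le_div_iff₀' ht).1 (Real.log_le_rpow_div hn₀.le ht)
      have hvalue : residueClass a n = Real.log n :=
        (Set.indicator_of_mem (by exact hna) _).trans
          (ArithmeticFunction.vonMangoldt_apply_prime hprime)
      rw [Set.indicator_of_mem (Set.mem_ofPred.2 ⟨hprime, hna⟩), if_pos hprime, zero_div, add_zero,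
        hvalue]
      calc t * (Real.log n / (n * (n : ℝ) ^ t))
          = (n : ℝ)⁻¹ * (t * Real.log n / (n : ℝ) ^ t) := by field_simp
        _ ≤ (n : ℝ)⁻¹ := mul_le_of_le_one_right (by positivity)
            ((div_le_one (by positivity)).2 hlog)
    · simp [hprime, hna]
  · have hrpow : (1 : ℝ) ≤ (n : ℝ) ^ t := Real.one_le_rpow (by exact_mod_cast hn) ht.le
    have hnonneg := residueClass_nonneg a n
    rw [Set.indicator_of_notMem (fun h => hprime h.1), if_neg hprime, zero_add]
    calc t * (residueClass a n / (n * (n : ℝ) ^ t))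
        ≤ 1 * (residueClass a n / (n * 1)) := by gcongr
      _ = residueClass a n / n := by rw [one_mul, mul_one]

lemma tendsto_mul_tsum_residueClass_of_summable {a : ZMod q}
    (ha : Summable ({p : ℕ | p.Prime ∧ (p : ZMod q) = a}.indicator fun p => (p : ℝ)⁻¹)) :
    Tendsto (fun t : ℝ => t * ∑' n : ℕ, residueClass a n / (n : ℝ) ^ (1 + t)) (𝓝[>] 0) (𝓝 0) := by
  have hpointwise (n : ℕ) :
      Tendsto (fun t : ℝ => t * (residueClass a n / (n : ℝ) ^ (1 + t))) (𝓝[>] 0) (𝓝 0) := by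
    rcases n.eq_zero_or_pos with rfl | hn
    · simp
    have hn₀ : (n : ℝ) ≠ 0 := Nat.cast_ne_zero.2 hn.ne'
    have hcont : Continuous fun t : ℝ => t * (residueClass a n / (n : ℝ) ^ (1 + t)) :=
      continuous_id.mul (continuous_const.div
        (continuous_const.rpow (by fun_prop) fun _ => .inl hn₀) fun t => by positivity)
    simpa using (hcont.tendsto 0).mono_left nhdsWithin_le_nhds
  have hbound : ∀ᶠ t : ℝ in 𝓝[>] 0, ∀ n : ℕ,
      ‖t * (residueClass a n / (n : ℝ) ^ (1 + t))‖ ≤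
        {p : ℕ | p.Prime ∧ (p : ZMod q) = a}.indicator (fun p => (p : ℝ)⁻¹) n +
          (if n.Prime then 0 else residueClass a n) / n := by
    filter_upwards [Ioo_mem_nhdsGT one_pos] with t ht n
    have hnonneg : 0 ≤ t * (residueClass a n / (n : ℝ) ^ (1 + t)) :=
      mul_nonneg ht.1.le (div_nonneg (residueClass_nonneg a n) (by positivity))
    rw [Real.norm_of_nonneg hnonneg]
    exact mul_residueClass_div_rpow_le a n ht.1 ht.2.le
  simpa only [tsum_mul_left, tsum_zero] using tendsto_tsum_of_dominated_convergence
    (ha.add (summable_residueClass_non_primes_div a)) hpointwise hbound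

theorem not_summable_inv_prime_residueClass [NeZero q] {a : ZMod q} (ha : IsUnit a) :
    ¬ Summable ({p : ℕ | p.Prime ∧ (p : ZMod q) = a}.indicator fun p => (p : ℝ)⁻¹) := by
  intro hsummable
  obtain ⟨C, hC⟩ := LSeries_residueClass_lower_bound ha
  have hlower : Tendsto (fun t : ℝ => (q.totient : ℝ)⁻¹ - t * C) (𝓝[>] 0)
      (𝓝 (q.totient : ℝ)⁻¹) := by
    have hcont : Continuous fun t : ℝ => (q.totient : ℝ)⁻¹ - t * C := by fun_prop
    simpa using (hcont.tendsto 0).mono_left nhdsWithin_le_nhds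
  have hle : ∀ᶠ t : ℝ in 𝓝[>] 0, (q.totient : ℝ)⁻¹ - t * C ≤
      t * ∑' n : ℕ, residueClass a n / (n : ℝ) ^ (1 + t) := by
    filter_upwards [Ioo_mem_nhdsGT one_pos] with t ht
    have ht₀ : t ≠ 0 := ht.1.ne'
    calc (q.totient : ℝ)⁻¹ - t * C
        = t * ((q.totient : ℝ)⁻¹ / (1 + t - 1) - C) := by rw [add_sub_cancel_left]; field_simp
      _ ≤ _ := mul_le_mul_of_nonneg_left (hC ⟨by linarith [ht.1], by linarith [ht.2]⟩) ht.1.le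
  have htotient : (0 : ℝ) < (q.totient : ℝ)⁻¹ :=
    inv_pos.2 (Nat.cast_pos.2 (Nat.totient_pos.2 (NeZero.pos q)))
  exact htotient.not_ge
    (le_of_tendsto_of_tendsto hlower (tendsto_mul_tsum_residueClass_of_summable hsummable) hle)

end PrimesInResidueClass

section StarSIC

variable {ι κ κ' R : Type*} [DecidableEq ι] [Fintype κ] [Fintype κ'] [CommRing R]

lemma span_range_eq_top_of_sum_vecMulVec [Finite ι] {x y : κ → ι → R} {c : R} (hc : IsUnit c)
    (hxy : ∑ m, vecMulVec (x m) (y m) = c • (1 : Matrix ι ι R)) :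
    Submodule.span R (Set.range x) = ⊤ := by
  cases nonempty_fintype ι
  refine Submodule.eq_top_iff'.2 fun v => (Submodule.smul_mem_iff_of_isUnit _ hc).1 ?_
  have hv : c • v = ∑ m, (y m ⬝ᵥ v) • x m := by
    rw [← one_mulVec v, ← smul_mulVec, ← hxy, sum_mulVec, one_mulVec]
    simp only [vecMulVec_mulVec, op_smul_eq_smul]
  rw [hv]
  exact Submodule.sum_mem _ fun m _ =>
    Submodule.smul_mem _ _ (Submodule.subset_span (Set.mem_range_self m))

/-- The vectors obtained from the columns of `H` by multiplying a single entry by `z`: the index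
`(a, j)` stands for the `a`-th column with its `j`-th entry multiplied. -/
def scaledColumn (H : Matrix ι ι R) (z : R) (m : ι × ι) : ι → R :=
  Pi.mulSingle m.2 z * H.col m.1

@[simp]
lemma scaledColumn_apply (H : Matrix ι ι R) (z : R) (a j k : ι) :
    scaledColumn H z (a, j) k = (if k = j then z else 1) * H k a := by
  simp [scaledColumn, Pi.mulSingle_apply]

variable [Fintype ι] [StarRing R]

/-- An `(a, b, c)`-SIC over a commutative star ring. The number of vectors is not a field: it is
fixed by the choice of the index type `κ`. -/
structure IsSICWith (a b c : R) (x : κ → ι → R) : Prop where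
  norm (m : κ) : star (x m) ⬝ᵥ x m = a
  cross : Pairwise fun m n => (star (x m) ⬝ᵥ x n) * (star (x n) ⬝ᵥ x m) = b
  frame : ∑ m, vecMulVec (x m) (star (x m)) = c • (1 : Matrix ι ι R)
  span : Submodule.span R (Set.range x) = ⊤

lemma IsSICWith.comp_equiv {a b c : R} {x : κ → ι → R} (hx : IsSICWith a b c x) (e : κ' ≃ κ) :
    IsSICWith a b c (x ∘ e) where
  norm m := hx.norm (e m)
  cross _ _ hmn := hx.cross (e.injective.ne hmn)
  frame := (e.sum_comp fun m => vecMulVec (x m) (star (x m))).trans hx.frame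
  span := by rw [e.surjective.range_comp, hx.span]

lemma star_scaledColumn_dotProduct (H : Matrix ι ι R) (z : R) (a b j l : ι) :
    star (scaledColumn H z (a, j)) ⬝ᵥ scaledColumn H z (b, l) =
      (Hᴴ * H) a b + (star z - 1) * (star (H j a) * H j b) + (z - 1) * (star (H l a) * H l b) +
        if j = l then (star z - 1) * (z - 1) * (star (H j a) * H j b) else 0 := by
  have hexpand (k : ι) :
      star (scaledColumn H z (a, j) k) * scaledColumn H z (b, l) k =
        star (H k a) * H k b +
          (if k = j then (star z - 1) * (star (H k a) * H k b) else 0) +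
          (if k = l then (z - 1) * (star (H k a) * H k b) else 0) +
          if k = j then if k = l then (star z - 1) * (z - 1) * (star (H k a) * H k b) else 0
            else 0 := by
    rw [scaledColumn_apply, scaledColumn_apply, star_mul']
    split_ifs <;> (try rw [star_one]) <;> ring
  simp only [dotProduct, Pi.star_apply, hexpand, Finset.sum_add_distrib, Finset.sum_ite_eq',
    Finset.mem_univ, if_true, mul_apply, conjTranspose_apply]

lemma sum_vecMulVec_scaledColumn {H : Matrix ι ι R} (hH : H.IsHadamard) (z : R) :
    ∑ m, vecMulVec (scaledColumn H z m) (star (scaledColumn H z m)) =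
      ((Fintype.card ι : R) * (Fintype.card ι + z * star z - 1)) • (1 : Matrix ι ι R) := by
  ext k l
  have hrow : ∑ a, H k a * star (H l a) = (Fintype.card ι : R) * (1 : Matrix ι ι R) k l := by
    simpa [mul_apply] using congrFun₂ hH.mul_conjTranspose k l
  have hscale : ∑ j, (if k = j then z else 1) * star (if k = j then z else 1) =
      (Fintype.card ι : R) + z * star z - 1 := by
    have hterm (j : ι) : (if k = j then z else 1) * star (if k = j then z else 1) =
        1 + if k = j then z * star z - 1 else 0 := by
      split_ifs <;> simp
    simp [hterm, Finset.sum_add_distrib, add_sub_assoc]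
  calc (∑ m, vecMulVec (scaledColumn H z m) (star (scaledColumn H z m))) k l
      = (∑ j, (if k = j then z else 1) * star (if l = j then z else 1)) *
          ∑ a, H k a * star (H l a) := by
        simp only [Matrix.sum_apply, vecMulVec_apply, Pi.star_apply, Fintype.sum_prod_type_right,
          scaledColumn_apply, star_mul', Finset.sum_mul_sum]
        exact Finset.sum_congr rfl fun j _ => Finset.sum_congr rfl fun a _ => by ring
    _ = (((Fintype.card ι : R) * (Fintype.card ι + z * star z - 1)) • (1 : Matrix ι ι R)) k l := by
        rw [hrow]
        rcases eq_or_ne k l with rfl | hkl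
        · rw [hscale, Matrix.smul_apply, smul_eq_mul]
          ring
        · simp [hkl]

lemma norm_scaledColumn {H : Matrix ι ι R} (hH : H.IsHadamard) (z : R) (m : ι × ι) :
    star (scaledColumn H z m) ⬝ᵥ scaledColumn H z m = Fintype.card ι + z * star z - 1 := by
  obtain ⟨a, j⟩ := m
  have hunit : star (H j a) * H j a = 1 := Unitary.star_mul_self_of_mem (hH.apply_mem j a)
  rw [star_scaledColumn_dotProduct, hH.conjTranspose_mul, hunit, if_pos rfl, Matrix.smul_apply,
    one_apply_eq, smul_eq_mul]
  ring

lemma star_scaledColumn_dotProduct_of_snd_ne {H : Matrix ι ι R} (hH : H.IsHadamard) (z : R) (a : ι)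
    {j l : ι} (hjl : j ≠ l) :
    star (scaledColumn H z (a, j)) ⬝ᵥ scaledColumn H z (a, l) =
      Fintype.card ι + (z + star z) - 2 := by
  have hunit (k : ι) : star (H k a) * H k a = 1 := Unitary.star_mul_self_of_mem (hH.apply_mem k a)
  rw [star_scaledColumn_dotProduct, hH.conjTranspose_mul, hunit, hunit, if_neg hjl,
    Matrix.smul_apply, one_apply_eq, smul_eq_mul]
  ring

-- The conditions on `z` say that it is a root of `X ^ 2 + 2 * X + 5`, like `-1 + 2 * i`.
lemma cross_scaledColumn_of_fst_ne {H : Matrix ι ι R} (hH : H.IsHadamard)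
    (hH_real : ∀ i j, IsSelfAdjoint (H i j)) {z : R} (hz_add : z + star z = -2)
    (hz_mul : z * star z = 5) {a b : ι} (hab : a ≠ b) (j l : ι) :
    (star (scaledColumn H z (a, j)) ⬝ᵥ scaledColumn H z (b, l)) *
      (star (scaledColumn H z (b, l)) ⬝ᵥ scaledColumn H z (a, j)) = 16 := by
  have hsq (k c : ι) : H k c ^ 2 = 1 := by
    simpa [(hH_real k c).star_eq, sq] using Unitary.star_mul_self_of_mem (hH.apply_mem k c)
  have horth : ∀ c c' : ι, c ≠ c' → (Hᴴ * H) c c' = 0 := fun c c' hcc' => by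
    rw [hH.conjTranspose_mul, Matrix.smul_apply, one_apply_ne hcc', smul_zero]
  have hprod_sq (k : ι) : (H k a * H k b) ^ 2 = 1 := by rw [mul_pow, hsq, hsq, one_mul]
  simp only [star_scaledColumn_dotProduct, horth a b hab, horth b a hab.symm, (hH_real _ _).star_eq,
    mul_comm (H _ b) (H _ a), zero_add, eq_comm (a := l)]
  rcases eq_or_ne j l with rfl | hjl
  · have hcoeff : (star z - 1) + (z - 1) + (star z - 1) * (z - 1) = 4 := by
      linear_combination hz_mul
    simp only [if_true, ← add_mul, hcoeff]
    linear_combination 16 * hprod_sq j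
  · have hnorm : (z - 1) * (star z - 1) = 8 := by linear_combination hz_mul - hz_add
    have hre : (z - 1) ^ 2 + (star z - 1) ^ 2 = 0 := by
      linear_combination (z + star z - 4) * hz_add - 2 * hz_mul
    simp only [if_neg hjl, add_zero]
    linear_combination ((H j a * H j b) ^ 2 + (H l a * H l b) ^ 2) * hnorm +
      (H j a * H j b) * (H l a * H l b) * hre + 8 * hprod_sq j + 8 * hprod_sq l

theorem isSICWith_scaledColumn {H : Matrix ι ι R} (hH : H.IsHadamard)
    (hH_real : ∀ i j, IsSelfAdjoint (H i j)) {z : R} (hz_add : z + star z = -2)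
    (hz_mul : z * star z = 5) (hcard : (Fintype.card ι : R) = 8) (h96 : IsUnit (96 : R)) :
    IsSICWith 12 16 96 (scaledColumn H z) := by
  have hframe : ∑ m, vecMulVec (scaledColumn H z m) (star (scaledColumn H z m)) =
      (96 : R) • (1 : Matrix ι ι R) := by
    rw [sum_vecMulVec_scaledColumn hH, hcard, hz_mul]
    norm_num
  refine ⟨fun m => ?_, ?_, hframe, span_range_eq_top_of_sum_vecMulVec h96 hframe⟩
  · rw [norm_scaledColumn hH, hcard, hz_mul]
    norm_num
  · rintro ⟨a, j⟩ ⟨b, l⟩ hne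
    rcases eq_or_ne a b with rfl | hab
    · have hjl : j ≠ l := fun h => hne (congrArg (Prod.mk a) h)
      rw [star_scaledColumn_dotProduct_of_snd_ne hH z a hjl,
        star_scaledColumn_dotProduct_of_snd_ne hH z a hjl.symm, hcard, hz_add]
      norm_num
    · exact cross_scaledColumn_of_fst_ne hH hH_real hz_add hz_mul hab j l

lemma isHadamard_of_isSelfAdjoint_of_sq_eq_one {H : Matrix ι ι R}
    (hH_real : ∀ i j, IsSelfAdjoint (H i j)) (hH_sq : ∀ i j, H i j ^ 2 = 1)
    (hH : Hᵀ * H = (Fintype.card ι : R) • (1 : Matrix ι ι R))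
    (hcard : IsRegular (Fintype.card ι : R)) : H.IsHadamard := by
  have hconj : Hᴴ = Hᵀ := by
    ext i j
    exact hH_real j i
  have hunitary (i j : ι) : H i j ∈ unitary R := by
    rw [Unitary.mem_iff, (hH_real i j).star_eq, ← sq, hH_sq]
    exact ⟨rfl, rfl⟩
  rw [← isHadamard_conjTranspose_iff]
  refine .of_mul_conjTranspose (fun i j => Unitary.star_mem (hunitary j i)) ?_ hcard
  rw [conjTranspose_conjTranspose, hconj, hH]

end StarSIC

section GaloisFieldSIC

variable {p : ℕ} [Fact p.Prime]

/-- Conjugation on `F_{p²}` is the Frobenius automorphism. -/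
instance frobeniusStarRing : StarRing (GaloisField p 2) where
  star x := x ^ p
  star_involutive x := by
    have : Fintype (GaloisField p 2) := Fintype.ofFinite _
    change (x ^ p) ^ p = x
    rw [← pow_mul, ← sq, ← GaloisField.card p 2 two_ne_zero, Nat.card_eq_fintype_card,
      FiniteField.pow_card]
  star_mul x y := by rw [← mul_pow, mul_comm]
  star_add x y := add_pow_char x y p

lemma star_eq_pow (x : GaloisField p 2) : star x = x ^ p := rfl

lemma isSIC_of_isSICWith {d : ℕ} {x : Fin (d ^ 2) → Fin d → GaloisField p 2}
    (hx : IsSICWith 12 16 96 x) : IsSIC p d x := by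
  refine ⟨hx.norm, fun _ _ hmn => hx.cross hmn, fun k l => ?_, hx.span⟩
  simpa [Matrix.sum_apply, vecMulVec_apply, star_eq_pow, one_apply] using congrFun₂ hx.frame k l

lemma isSelfAdjoint_algebraMap (c : ZMod p) :
    IsSelfAdjoint (algebraMap (ZMod p) (GaloisField p 2) c) := by
  rw [IsSelfAdjoint, star_eq_pow, ← map_pow, ZMod.pow_card]

lemma exists_sq_eq_neg_one_and_star_eq_neg (hp : p % 4 = 3) :
    ∃ i : GaloisField p 2, i ^ 2 = -1 ∧ star i = -i := by
  have : Fintype (GaloisField p 2) := Fintype.ofFinite _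
  have hsquare : IsSquare (-1 : GaloisField p 2) := by
    rw [FiniteField.isSquare_neg_one_iff, ← Nat.card_eq_fintype_card,
      GaloisField.card p 2 two_ne_zero, Nat.pow_mod, hp]
    decide
  obtain ⟨i, hi⟩ := hsquare
  have hi_sq : i ^ 2 = -1 := by rw [sq, hi]
  obtain ⟨k, hk⟩ : ∃ k, p = 2 * (2 * k + 1) + 1 := ⟨p / 4, by omega⟩
  have hi_pow : i ^ (2 * (2 * k + 1) + 1) = -i := by
    rw [pow_succ, pow_mul, hi_sq, Odd.neg_one_pow ⟨k, rfl⟩, neg_one_mul]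
  exact ⟨i, hi_sq, by rw [star_eq_pow, ← hi_pow, ← hk]⟩

lemma exists_add_star_eq_neg_two_and_mul_star_eq_five (hp : p % 4 = 3) :
    ∃ z : GaloisField p 2, z + star z = -2 ∧ z * star z = 5 := by
  obtain ⟨i, hi_sq, hi_star⟩ := exists_sq_eq_neg_one_and_star_eq_neg hp
  have hstar : star (-1 + 2 * i) = -1 - 2 * i := by simp [hi_star, sub_eq_add_neg, mul_comm]
  refine ⟨-1 + 2 * i, ?_, ?_⟩ <;> rw [hstar]
  · ring
  · linear_combination (-4) * hi_sq

/-- There is a `p`-modular Hadamard matrix of order `d`. -/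
def ExistsModularHadamard (p d : ℕ) : Prop :=
  ∃ H : Matrix (Fin d) (Fin d) (ZMod p), (∀ i j, H i j ^ 2 = 1) ∧
    Hᵀ * H = (d : ZMod p) • (1 : Matrix (Fin d) (Fin d) (ZMod p))

lemma isHadamard_map_algebraMap {d : ℕ} {H : Matrix (Fin d) (Fin d) (ZMod p)}
    (hH_sq : ∀ i j, H i j ^ 2 = 1)
    (hH : Hᵀ * H = (d : ZMod p) • (1 : Matrix (Fin d) (Fin d) (ZMod p)))
    (hd : (d : GaloisField p 2) ≠ 0) :
    (H.map (algebraMap (ZMod p) (GaloisField p 2))).IsHadamard := by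
  refine isHadamard_of_isSelfAdjoint_of_sq_eq_one (fun i j => isSelfAdjoint_algebraMap (H i j))
    (fun i j => ?_) ?_ (.of_ne_zero (by rwa [Fintype.card_fin]))
  · rw [map_apply, ← map_pow, hH_sq, map_one]
  · rw [← transpose_map, ← Matrix.map_mul, hH, Matrix.map_smul' _ _ _ (map_mul _)]
    simp

lemma ninetySix_ne_zero (hp₂ : p ≠ 2) (hp₃ : p ≠ 3) : (96 : GaloisField p 2) ≠ 0 := by
  have hprime : p.Prime := Fact.out
  have hdvd : ¬ p ∣ 2 ^ 5 * 3 := fun h => (hprime.dvd_mul.1 h).elim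
    (fun h₂ => hp₂ ((Nat.prime_dvd_prime_iff_eq hprime Nat.prime_two).1
      (hprime.dvd_of_dvd_pow h₂)))
    fun h₃ => hp₃ ((Nat.prime_dvd_prime_iff_eq hprime Nat.prime_three).1 h₃)
  exact_mod_cast (CharP.cast_eq_zero_iff (GaloisField p 2) p 96).not.2 hdvd

theorem exists_isSIC_of_existsModularHadamard (hp : p % 4 = 3) (hp₃ : p ≠ 3) {d : ℕ}
    (hd : d ≡ 8 [MOD p]) (hHadamard : ExistsModularHadamard p d) :
    ∃ x : Fin (d ^ 2) → Fin d → GaloisField p 2, IsSIC p d x := by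
  obtain ⟨H, hH_sq, hH⟩ := hHadamard
  have hd₈ : (d : GaloisField p 2) = 8 := by
    exact_mod_cast (CharP.natCast_eq_natCast (GaloisField p 2) p).2 hd
  have h96 : (96 : GaloisField p 2) ≠ 0 := ninetySix_ne_zero (by omega) hp₃
  have hd₀ : (d : GaloisField p 2) ≠ 0 := fun hd₀ => h96 (by linear_combination 12 * (hd₀ - hd₈))
  obtain ⟨z, hz_add, hz_mul⟩ := exists_add_star_eq_neg_two_and_mul_star_eq_five hp
  have hSIC := isSICWith_scaledColumn (isHadamard_map_algebraMap hH_sq hH hd₀)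
    (fun i j => isSelfAdjoint_algebraMap (H i j)) hz_add hz_mul (by rwa [Fintype.card_fin])
    (.mk0 _ h96)
  let e : Fin (d ^ 2) ≃ Fin d × Fin d := Fintype.equivOfCardEq (by simp [sq])
  exact ⟨_, isSIC_of_isSICWith (hSIC.comp_equiv e)⟩

lemma exists_ne_zero_sq_eq_of_modEq_eight (hp : p % 8 = 7) {d : ℕ} (hd : d ≡ 8 [MOD p]) :
    ∃ a : ZMod p, a ≠ 0 ∧ a ^ 2 = (d : ZMod p) := by
  have hp₂ : p ≠ 2 := by omega
  have hd₈ : (d : ZMod p) = 8 := by exact_mod_cast (ZMod.natCast_eq_natCast_iff d 8 p).2 hd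
  have h2 : (2 : ZMod p) ≠ 0 := Ring.two_ne_zero (by rwa [ZMod.ringChar_zmod_n])
  obtain ⟨b, hb⟩ := (ZMod.exists_sq_eq_two_iff hp₂).2 (.inr hp)
  have hb₀ : b ≠ 0 := by
    rintro rfl
    exact h2 (by simpa using hb)
  exact ⟨2 * b, mul_ne_zero h2 hb₀, by rw [hd₈]; linear_combination (-4) * hb⟩

end GaloisFieldSIC

/-- The dimensions `d` for which `F_{p²}^d` contains a `(12, 16, 96)`-SIC for some prime
`p ≡ 3 [MOD 4]`. -/
def sicDimensions : Set ℕ :=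
  {d | ∃ p : ℕ, ∃ hp : p.Prime, p % 4 = 3 ∧
    ∃ x : Fin (d ^ 2) → Fin d → @GaloisField p ⟨hp⟩ 2, @IsSIC p ⟨hp⟩ d x}

theorem stmt_7_general
    (hHadamard : ∀ p : ℕ, p.Prime → p % 8 = 7 →
      ∀ᶠ d in atTop, d ≡ 8 [MOD p] → ExistsModularHadamard p d) :
    HasDensityZero sicDimensionsᶜ := by
  have hprimes : ∀ p ∈ {p : ℕ | p.Prime ∧ (p : ZMod 8) = 7}, p.Prime ∧ p % 8 = 7 :=
    fun p hp => ⟨hp.1, (ZMod.natCast_eq_natCast_iff p 7 8).1 (by exact_mod_cast hp.2)⟩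
  have hunit : IsUnit (7 : ZMod 8) := by decide
  refine hasDensityZero_of_eventually_notMem_residue (fun p hp => (hprimes p hp).1)
    (not_summable_inv_prime_residueClass hunit) (fun _ => 8) fun p hp => ?_
  obtain ⟨hp, hp₈⟩ := hprimes p hp
  have : Fact p.Prime := ⟨hp⟩
  filter_upwards [hHadamard p hp hp₈] with d hd hd₈
  exact not_not_intro ⟨p, hp, by omega,
    exists_isSIC_of_existsModularHadamard (by omega) (by omega) hd₈ (hd hd₈)⟩

theorem stmt_7
    (hadamard_conj : ∀ p : ℕ, p.Prime → p ≠ 2 → ∃ N : ℕ, ∀ d : ℕ, N ≤ d →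
      (Even d ∨ ∃ a : ZMod p, a ≠ 0 ∧ a ^ 2 = (d : ZMod p)) →
      ∃ H : Matrix (Fin d) (Fin d) (ZMod p),
        (∀ i j, H i j ^ 2 = 1) ∧
        H.transpose * H = (d : ZMod p) • (1 : Matrix (Fin d) (Fin d) (ZMod p))) :
    Filter.limsup (fun n : ℕ =>
      (({d : ℕ | ¬ ∃ p : ℕ, ∃ hp : p.Prime, p % 4 = 3 ∧
            ∃ x : Fin (d ^ 2) → Fin d → @GaloisField p ⟨hp⟩ 2,
              @IsSIC p ⟨hp⟩ d x} ∩ Set.Icc 1 n).ncard : ℝ) / (n : ℝ))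
      Filter.atTop = 0 := by
  refine (stmt_7_general fun p hp hp₈ => ?_).limsup_eq
  have : Fact p.Prime := ⟨hp⟩
  obtain ⟨N, hN⟩ := hadamard_conj p hp (by omega)
  filter_upwards [eventually_ge_atTop N] with d hd hd₈
  exact hN d hd (.inr (exists_ne_zero_sq_eq_of_modEq_eight hp₈ hd₈))
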